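/- arXiv:1301.6772 — 2 statements merged into one kernel-verified Lean document; each statement's English description precedes it below -/
import Mathlib

section
/- For any ε > 0 there is a constant K (depending only on A, m, n, ε) such that for every integer q ≥ 1 and every tuple of integers a = (a_{ij})_{1≤i≤j≤m} with gcd(q, a_{11}, a_{12}, …, a_{mm}) = 1, one has |S_{a,q}(b)| ≤ K·q^{mn − n/(2R) + ε}, uniformly in b. -/
open scoped BigOperators
open MeasureTheory Matrix Filter

noncomputable section

/-- Index type for pairs `(i,j)` with `i ≤ j` (the `R = m(m+1)/2` upper-triangular positions). -/
abbrev Idx (m : ℕ) : Type := {p : Fin m × Fin m // p.1 ≤ p.2}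

instance idxNonempty (m : ℕ) [NeZero m] : Nonempty (Idx m) :=
  ⟨⟨(0, 0), le_rfl⟩⟩

/-- `e(z) = exp(2πiz)` -/
def eR (z : ℝ) : ℂ := Complex.exp (2 * Real.pi * Complex.I * z)

/-- `xᵢᵀ A xⱼ` for integer vectors. -/
def quadZ {m n : ℕ} (A : Matrix (Fin n) (Fin n) ℤ) (x : Fin m → Fin n → ℤ)
    (i j : Fin m) : ℤ :=
  ∑ s, ∑ t, x i s * A s t * x j t

/-- `vᵢᵀ A vⱼ` for real vectors. -/
def quadR {m n : ℕ} (A : Matrix (Fin n) (Fin n) ℤ) (v : Fin m → Fin n → ℝ)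
    (i j : Fin m) : ℝ :=
  ∑ s, ∑ t, v i s * (A s t : ℝ) * v j t

/-- The tuple `b = (B_{ij})_{1 ≤ i ≤ j ≤ m}`. -/
def bvec {m : ℕ} (B : Matrix (Fin m) (Fin m) ℤ) (p : Idx m) : ℤ := B p.1.1 p.1.2

/-- `γ_i`, defined by `B₁₁ = B_{ii}^{γ_i}`, i.e. `γ_i = log B₁₁ / log B_{ii}`. -/
def gamI {m : ℕ} [NeZero m] (B : Matrix (Fin m) (Fin m) ℤ) (i : Fin m) : ℝ :=
  Real.log ((B 0 0 : ℤ) : ℝ) / Real.log ((B i i : ℤ) : ℝ)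

/-- `γ = Σ 1/γ_i`. -/
def gamT {m : ℕ} [NeZero m] (B : Matrix (Fin m) (Fin m) ℤ) : ℝ :=
  ∑ i, (gamI B i)⁻¹

/-- `P_i = C^{1/γ_i} B_{ii}^{1/2}`. -/
def PP {m : ℕ} [NeZero m] (C : ℝ) (B : Matrix (Fin m) (Fin m) ℤ) (i : Fin m) : ℝ :=
  C ^ (gamI B i)⁻¹ * ((B i i : ℤ) : ℝ) ^ ((1 : ℝ) / 2)

/-- `Π = ∏ P_i`. -/
def PiP {m : ℕ} [NeZero m] (C : ℝ) (B : Matrix (Fin m) (Fin m) ℤ) : ℝ :=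
  ∏ i, PP C B i

/-- The box of integer tuples `(x₁,…,x_m)` with `|x_i| ≤ P_i` (max-norm). -/
def box (m n : ℕ) [NeZero m] (C : ℝ) (B : Matrix (Fin m) (Fin m) ℤ) :
    Finset (Fin m → Fin n → ℤ) :=
  Finset.Icc (fun i _ => -⌊PP C B i⌋) (fun i _ => ⌊PP C B i⌋)

/-- The exponential sum `S(α, b)`. -/
def Ssum {m n : ℕ} [NeZero m] (A : Matrix (Fin n) (Fin n) ℤ) (C : ℝ)
    (B : Matrix (Fin m) (Fin m) ℤ) (α : Idx m → ℝ) (b : Idx m → ℤ) : ℂ :=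
  ∑ x ∈ box m n C B,
    eR (∑ p : Idx m, α p * ((quadZ A x p.1.1 p.1.2 - b p : ℤ) : ℝ))

/-- The complete exponential sum `S_{a,q}(b)`. -/
def Saq {m n : ℕ} (A : Matrix (Fin n) (Fin n) ℤ) (q : ℤ) (a b : Idx m → ℤ) : ℂ :=
  ∑ z ∈ (Finset.Icc (fun _ _ => 0) (fun _ _ => q - 1) : Finset (Fin m → Fin n → ℤ)),
    eR ((∑ p : Idx m, (a p : ℝ) * ((quadZ A z p.1.1 p.1.2 - b p : ℤ) : ℝ)) / (q : ℝ))

/-- Residue tuples `a (mod q)` with `gcd(q, a) = 1`. -/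
def resid (m : ℕ) (q : ℤ) : Finset (Idx m → ℤ) :=
  (Finset.Icc (fun _ => 0) (fun _ => q - 1)).filter fun a =>
    Int.gcd q (Finset.univ.gcd a) = 1

/-- The `q`-th term of the singular series. -/
def STerm {m n : ℕ} (A : Matrix (Fin n) (Fin n) ℤ) (B : Matrix (Fin m) (Fin m) ℤ)
    (q : ℕ) : ℂ :=
  ((q : ℂ) ^ (m * n))⁻¹ * ∑ a ∈ resid m (q : ℤ), Saq A (q : ℤ) a (bvec B)

/-- The truncated singular series `𝔖(Q; b)`. -/
def SingT {m n : ℕ} (A : Matrix (Fin n) (Fin n) ℤ) (B : Matrix (Fin m) (Fin m) ℤ)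
    (Q : ℝ) : ℂ :=
  ∑ q ∈ Finset.Icc 1 ⌊Q⌋₊, STerm A B q

/-- The singular series `𝔖(b) = Σ_{q=1}^∞ q^{-mn} Σ_{a mod q, (a,q)=1} S_{a,q}(b)`. -/
def Sing {m n : ℕ} (A : Matrix (Fin n) (Fin n) ℤ) (B : Matrix (Fin m) (Fin m) ℤ) : ℂ :=
  ∑' q : ℕ, STerm A B q

/-- The oscillatory integral `I` with weights `w_p`;
`I(P,β)` is obtained with `w_p = P_iP_jβ_{ij}` and `I(η)` with `w = η`. -/
def Iint {m n : ℕ} (A : Matrix (Fin n) (Fin n) ℤ) (w : Idx m → ℝ) : ℂ :=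
  ∫ v in (Set.univ.pi fun _ : Fin m => Set.univ.pi fun _ : Fin n => Set.Icc (-1 : ℝ) 1),
    eR (∑ p : Idx m, w p * quadR A v p.1.1 p.1.2)

/-- The truncated singular integral `𝔍(Q; c)`. -/
def JintT {m n : ℕ} (A : Matrix (Fin n) (Fin n) ℤ) (Q : ℝ) (c : Idx m → ℝ) : ℂ :=
  ∫ η in (Set.univ.pi fun _ : Idx m => Set.Icc (-Q) Q),
    Iint (n := n) A η * eR (-(∑ p : Idx m, η p * c p))

/-- The singular integral `𝔍(c)`. -/
def Jint {m n : ℕ} (A : Matrix (Fin n) (Fin n) ℤ) (c : Idx m → ℝ) : ℂ :=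
  ∫ η : Idx m → ℝ, Iint (n := n) A η * eR (-(∑ p : Idx m, η p * c p))

/-- The major arc `M_{a,q}(Δ)` (with constant `c₀`). -/
def MArc {m : ℕ} [NeZero m] (C : ℝ) (B : Matrix (Fin m) (Fin m) ℤ) (c₀ Δ : ℝ)
    (q : ℤ) (a : Idx m → ℤ) : Set (Idx m → ℝ) :=
  {α | (∀ p, 0 ≤ α p ∧ α p < 1) ∧
    ∀ p : Idx m, |(q : ℝ) * α p - (a p : ℝ)| ≤
      c₀ * PiP C B ^ Δ * (PP C B p.1.1 * PP C B p.1.2)⁻¹}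

/-- The enlarged major arc `M'_{a,q}(Δ)` (with constant `c₀`). -/
def MArc' {m : ℕ} [NeZero m] (C : ℝ) (B : Matrix (Fin m) (Fin m) ℤ) (c₀ Δ : ℝ)
    (q : ℤ) (a : Idx m → ℤ) : Set (Idx m → ℝ) :=
  {α | (∀ p, 0 ≤ α p ∧ α p < 1) ∧
    ∀ p : Idx m, |(q : ℝ) * α p - (a p : ℝ)| ≤
      c₀ * (q : ℝ) * PiP C B ^ Δ * (PP C B p.1.1 * PP C B p.1.2)⁻¹}

/-- Admissible pairs `(q, a)`: `1 ≤ q ≤ c₀Π^Δ`, `0 ≤ a_{ij} < q`, `gcd(q,a) = 1`. -/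
def validAQ {m : ℕ} [NeZero m] (C : ℝ) (B : Matrix (Fin m) (Fin m) ℤ) (c₀ Δ : ℝ)
    (q : ℤ) (a : Idx m → ℤ) : Prop :=
  1 ≤ q ∧ (q : ℝ) ≤ c₀ * PiP C B ^ Δ ∧ (∀ p, 0 ≤ a p ∧ a p < q) ∧
    Int.gcd q (Finset.univ.gcd a) = 1

/-- The major arcs `M(Δ)`. -/
def MSet {m : ℕ} [NeZero m] (C : ℝ) (B : Matrix (Fin m) (Fin m) ℤ) (c₀ Δ : ℝ) :
    Set (Idx m → ℝ) :=
  ⋃ q : ℤ, ⋃ a : Idx m → ℤ, ⋃ _ : validAQ C B c₀ Δ q a, MArc C B c₀ Δ q a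

/-- `N(A,B)`: the number of integral representations of `B` by `A`. -/
def NAB (m n : ℕ) (A : Matrix (Fin n) (Fin n) ℤ) (B : Matrix (Fin m) (Fin m) ℤ) : ℕ :=
  Nat.card {X : Matrix (Fin n) (Fin m) ℤ | Xᵀ * A * X = B}

/-- `#{X mod q : XᵀAX ≡ B (mod q)}`. -/
def locCount (m n : ℕ) (A : Matrix (Fin n) (Fin n) ℤ) (B : Matrix (Fin m) (Fin m) ℤ)
    (q : ℕ) : ℕ :=
  Nat.card {X : Matrix (Fin n) (Fin m) (ZMod q) |
    Xᵀ * A.map ((↑) : ℤ → ZMod q) * X = B.map ((↑) : ℤ → ZMod q)}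

/-- The archimedean density `α_∞(A,B)`. -/
def alphaInf (m n : ℕ) (A : Matrix (Fin n) (Fin n) ℤ)
    (B : Matrix (Fin m) (Fin m) ℤ) : ℝ :=
  ((A.det : ℤ) : ℝ) ^ (-(m : ℝ) / 2) * ((B.det : ℤ) : ℝ) ^ (((n : ℝ) - m - 1) / 2) *
    Real.pi ^ ((m : ℝ) * (2 * (n : ℝ) - m + 1) / 4) *
    ∏ j ∈ Finset.Ioc (n - m) n, (Real.Gamma ((j : ℝ) / 2))⁻¹

/-- `max_{1≤i≤j≤m} |η_{ij}|`. -/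
def maxAbs {m : ℕ} [NeZero m] (η : Idx m → ℝ) : ℝ := ⨆ p : Idx m, |η p|

/-- **Weyl differencing**: a quadratic exponential sum over a finite abelian group is controlled by
the size of the radical of the polar form. -/
lemma norm_sq_sum_addChar_le {G R : Type*} [AddCommGroup G] [Fintype G] [AddCommGroup R]
    [Finite R] (ψ : AddChar R ℂ) (hψ : Function.Injective ψ) (Q : G → R) (β : G → G →+ R)
    (hQ : ∀ w z, Q (w + z) = Q w + Q z + β w z) :
    ‖∑ z, ψ (Q z)‖ ^ 2 ≤ (Fintype.card G : ℝ) * Nat.card {w // β w = 0} := by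
  classical
  have hker (w : G) : ψ.compAddMonoidHom (β w) = 0 ↔ β w = 0 := by
    constructor
    · intro h
      ext z
      apply hψ
      simpa using DFunLike.congr_fun h z
    · intro h
      ext z
      simp [h]
  have hconj (z : G) : ψ (Q z) * (starRingEnd ℂ) (ψ (Q z)) = 1 := by
    rw [Complex.mul_conj', ψ.norm_apply]
    simp
  have key : (∑ z, ψ (Q z)) * (starRingEnd ℂ) (∑ z, ψ (Q z)) =
      ∑ w, ψ (Q w) * ∑ z, ψ.compAddMonoidHom (β w) z := by
    rw [map_sum, Finset.mul_sum]
    have (z : G) : (∑ y, ψ (Q y)) * (starRingEnd ℂ) (ψ (Q z)) =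
        ∑ w, ψ (Q w) * ψ.compAddMonoidHom (β w) z := by
      rw [← Equiv.sum_comp (Equiv.addRight z) fun y => ψ (Q y), Finset.sum_mul]
      refine Finset.sum_congr rfl fun w _ => ?_
      simp only [Equiv.coe_addRight, hQ, AddChar.map_add_eq_mul, AddChar.compAddMonoidHom_apply]
      linear_combination ψ (Q w) * ψ (β w z) * hconj z
    simp_rw [this, Finset.mul_sum]
    exact Finset.sum_comm
  have hcard : (Nat.card {w // β w = 0} : ℝ) = ∑ w, if β w = 0 then 1 else 0 := by
    rw [Finset.sum_boole, Nat.card_eq_fintype_card, Fintype.card_subtype]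
  calc ‖∑ z, ψ (Q z)‖ ^ 2
      = ‖∑ w, ψ (Q w) * ∑ z, ψ.compAddMonoidHom (β w) z‖ := by
        rw [← key, norm_mul, RCLike.norm_conj, sq]
    _ ≤ ∑ w, ‖ψ (Q w) * ∑ z, ψ.compAddMonoidHom (β w) z‖ := norm_sum_le _ _
    _ = ∑ w, (Fintype.card G : ℝ) * if β w = 0 then 1 else 0 := by
        refine Finset.sum_congr rfl fun w _ => ?_
        rw [norm_mul, ψ.norm_apply, one_mul, AddChar.sum_eq_ite]
        simp only [hker]
        split_ifs <;> simp
    _ = _ := by rw [hcard, Finset.mul_sum]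

/-- The order of the image of a matrix over `ZMod q` annihilates its entries, so a matrix that is
nearly primitive has a small kernel. -/
lemma card_ker_mulVec_mul_le {ι : Type*} [Fintype ι] (q : ℕ) [NeZero q]
    (M : Matrix ι ι (ZMod q)) (D : ℕ) (hD : 0 < D)
    (hM : ∀ k : ℕ, (∀ i j, (k : ZMod q) * M i j = 0) → q ∣ k * D) :
    Nat.card {v // M *ᵥ v = 0} * q ≤ D * q ^ Fintype.card ι := by
  classical
  set f : (ι → ZMod q) →+ (ι → ZMod q) := M.mulVecLin.toAddMonoidHom with hf
  have hdvd : q ∣ Nat.card f.range * D := by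
    refine hM _ fun i j => ?_
    have h := congrArg Subtype.val
      (card_nsmul_eq_zero' (x := (⟨f (Pi.single j 1), Pi.single j 1, rfl⟩ : f.range)))
    simpa [hf] using congrFun h i
  have hle : q ≤ Nat.card f.range * D :=
    Nat.le_of_dvd (Nat.mul_pos Nat.card_pos hD) hdvd
  have hcard : Nat.card f.ker * Nat.card f.range = q ^ Fintype.card ι := by
    rw [← AddSubgroup.index_ker, AddSubgroup.card_mul_index]
    simp
  calc Nat.card {v // M *ᵥ v = 0} * q
      ≤ Nat.card f.ker * (Nat.card f.range * D) := Nat.mul_le_mul le_rfl hle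
    _ = D * q ^ Fintype.card ι := by rw [← hcard]; ring

lemma card_mul_mul_eq_zero_le {ι κ R : Type*} [Fintype ι] [Fintype κ] [DecidableEq κ]
    [CommRing R] [Finite R] (M : Matrix ι ι R) (A : Matrix κ κ R) :
    Nat.card {w : Matrix ι κ R // M * w * A = 0} ≤
      Nat.card {v // (A.det • M) *ᵥ v = 0} ^ Fintype.card κ := by
  have hcol (w : Matrix ι κ R) (hw : M * w * A = 0) (s : κ) :
      (A.det • M) *ᵥ (fun i => w i s) = 0 := by
    have h : A.det • (M * w) = 0 := by
      have := congrArg (· * A.adjugate) hw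
      simpa [Matrix.mul_assoc, Matrix.mul_adjugate] using this
    rw [← Matrix.smul_mul] at h
    ext i
    exact congrFun (congrFun h i) s
  rw [← Nat.card_eq_fintype_card (α := κ), ← Nat.card_fun]
  refine Nat.card_le_card_of_injective
    (fun w s => (⟨fun i => w.1 i s, hcol w.1 w.2 s⟩ : {v // (A.det • M) *ᵥ v = 0})) ?_
  intro w w' h
  ext i s
  exact congrFun (congrArg Subtype.val (congrFun h s)) i

/-- Exponential sum bound for the quadratic form `z ↦ tr (Tᵀ z A zᵀ)` over a finite ring. -/
lemma norm_sq_sum_addChar_trace_le {ι κ R : Type*} [Fintype ι] [Fintype κ] [DecidableEq ι]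
    [DecidableEq κ] [CommRing R] [Fintype R] (ψ : AddChar R ℂ) (hψ : Function.Injective ψ)
    (T : Matrix ι ι R) (A : Matrix κ κ R) (hA : A.IsSymm) :
    ‖∑ z : Matrix ι κ R, ψ (Tᵀ * (z * A * zᵀ)).trace‖ ^ 2 ≤
      (Fintype.card R : ℝ) ^ (Fintype.card ι * Fintype.card κ) *
        (Nat.card {v // (A.det • (T + Tᵀ)) *ᵥ v = 0} : ℝ) ^ Fintype.card κ := by
  let β (w : Matrix ι κ R) : Matrix ι κ R →+ R :=
    AddMonoidHom.mk' (fun z => ((T + Tᵀ) * w * A * zᵀ).trace) fun x y => by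
      simp [Matrix.mul_add]
  have hβ (w : Matrix ι κ R) (hw : β w = 0) : (T + Tᵀ) * w * A = 0 := by
    refine Matrix.ext_iff_trace_mul_right.2 fun x => ?_
    simpa [β] using DFunLike.congr_fun hw xᵀ
  have hflip (w z : Matrix ι κ R) : (Tᵀ * (z * A * wᵀ)).trace = (T * (w * A * zᵀ)).trace := by
    rw [← Matrix.trace_transpose, Matrix.trace_mul_comm]
    simp [Matrix.mul_assoc, hA.eq]
  refine (norm_sq_sum_addChar_le ψ hψ _ β fun w z => ?_).trans ?_
  · simp only [β, AddMonoidHom.mk'_apply, Matrix.transpose_add, Matrix.mul_add, Matrix.add_mul,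
      Matrix.trace_add]
    rw [hflip w z]
    simp only [Matrix.mul_assoc]
    ring
  · have hcard : Fintype.card (Matrix ι κ R) =
        Fintype.card R ^ (Fintype.card ι * Fintype.card κ) := by
      rw [← Nat.card_eq_fintype_card]
      change Nat.card (ι → κ → R) = _
      simp [← pow_mul, mul_comm]
    rw [hcard]
    push_cast
    gcongr
    have hle : Nat.card {w // β w = 0} ≤
        Nat.card {w : Matrix ι κ R // (T + Tᵀ) * w * A = 0} :=
      Nat.card_le_card_of_injective _ (Subtype.map_injective hβ Function.injective_id)
    exact_mod_cast hle.trans (card_mul_mul_eq_zero_le _ _)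

/-- The upper triangular matrix with entries `a`. -/
def upperMatrix {m : ℕ} {R : Type*} [Zero R] (a : Idx m → R) : Matrix (Fin m) (Fin m) R :=
  Matrix.of fun i j => if h : i ≤ j then a ⟨(i, j), h⟩ else 0

lemma trace_upperMatrix_transpose_mul {m : ℕ} {R : Type*} [CommRing R] (a : Idx m → R)
    (X : Matrix (Fin m) (Fin m) R) :
    ((upperMatrix a)ᵀ * X).trace = ∑ p : Idx m, a p * X p.1.1 p.1.2 := by
  have h : ∑ p : Idx m, a p * X p.1.1 p.1.2 =
      ∑ p : Idx m, upperMatrix a p.1.1 p.1.2 * X p.1.1 p.1.2 :=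
    Finset.sum_congr rfl fun p _ => by simp [upperMatrix, p.2]
  rw [h, ← Finset.sum_subtype {p : Fin m × Fin m | p.1 ≤ p.2} (by simp)
    fun p => upperMatrix a p.1 p.2 * X p.1 p.2, Finset.sum_filter_of_ne]
  · rw [Fintype.sum_prod_type_right]
    simp only [Matrix.trace, Matrix.diag_apply, Matrix.mul_apply, Matrix.transpose_apply]
  · intro p _ hp
    by_contra hlt
    exact hp (by simp [upperMatrix, hlt])

lemma dvd_of_mul_upperMatrix_eq_zero {m : ℕ} (q : ℕ) (a : Idx m → ℤ)
    (ha : Int.gcd q (Finset.univ.gcd a) = 1) (d : ℤ) (k : ℕ)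
    (hk : ∀ i j, (k : ZMod q) * ((d : ZMod q) • (upperMatrix (fun p => (a p : ZMod q)) +
      (upperMatrix fun p => (a p : ZMod q))ᵀ)) i j = 0) :
    q ∣ k * (2 * d).natAbs := by
  have hdvd (p : Idx m) : (q : ℤ) ∣ (k * (2 * d)) * a p := by
    rw [← ZMod.intCast_zmod_eq_zero_iff_dvd]
    obtain ⟨⟨i, j⟩, hij⟩ := p
    have h := hk i j
    change i ≤ j at hij
    rcases hij.eq_or_lt with rfl | hlt
    · simp [upperMatrix] at h
      push_cast
      linear_combination h
    · simp [upperMatrix, hij, hlt.not_ge] at h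
      push_cast
      linear_combination 2 * h
  have hg : (q : ℤ) ∣ (k * (2 * d)) * Finset.univ.gcd a := by
    have : (q : ℤ) ∣ Finset.univ.gcd fun p => (k * (2 * d)) * a p :=
      Finset.dvd_gcd fun p _ => hdvd p
    rw [Finset.gcd_mul_left] at this
    exact this.trans (mul_dvd_mul_right (normalize_associated _).dvd _)
  have := Int.dvd_of_dvd_mul_left_of_gcd_one hg ha
  simpa [Int.natAbs_mul] using Int.natAbs_dvd_natAbs.2 this

lemma sum_Icc_eq_sum_zmod {m n : ℕ} (q : ℕ) [NeZero q]
    (F : Matrix (Fin m) (Fin n) (ZMod q) → ℂ) :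
    ∑ z ∈ (Finset.Icc (fun _ _ => 0) (fun _ _ => (q : ℤ) - 1) : Finset (Fin m → Fin n → ℤ)),
      F (Matrix.of fun i s => (z i s : ZMod q)) = ∑ z, F z := by
  refine Finset.sum_nbij' (fun z => Matrix.of fun i s => (z i s : ZMod q)) (fun z i s => ((z i s).val : ℤ))
    (fun _ _ => Finset.mem_univ _) ?_ ?_ ?_ (fun _ _ => rfl)
  · intro z _
    simp only [Finset.mem_Icc, Pi.le_def]
    exact ⟨fun i s => by positivity, fun i s => by have := (z i s).val_lt; omega⟩
  · intro z hz
    simp only [Finset.mem_Icc, Pi.le_def] at hz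
    ext i s
    rw [Matrix.of_apply, ZMod.val_intCast]
    exact Int.emod_eq_of_lt (hz.1 i s) (by have := hz.2 i s; omega)
  · intro z _
    ext i s
    simp

lemma norm_Saq_eq {m n : ℕ} (A : Matrix (Fin n) (Fin n) ℤ) (q : ℕ) [NeZero q]
    (a b : Idx m → ℤ) :
    ‖Saq A q a b‖ = ‖∑ z : Matrix (Fin m) (Fin n) (ZMod q),
      ZMod.stdAddChar ((upperMatrix fun p => (a p : ZMod q))ᵀ *
        (z * A.map ((↑) : ℤ → ZMod q) * zᵀ)).trace‖ := by
  have hterm (z : Fin m → Fin n → ℤ) :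
      eR ((∑ p : Idx m, (a p : ℝ) * ((quadZ A z p.1.1 p.1.2 - b p : ℤ) : ℝ)) / ((q : ℤ) : ℝ)) =
        ZMod.stdAddChar ((upperMatrix fun p => (a p : ZMod q))ᵀ *
          ((Matrix.of fun i s => (z i s : ZMod q)) * A.map ((↑) : ℤ → ZMod q) *
            (Matrix.of fun i s => (z i s : ZMod q))ᵀ)).trace *
          ZMod.stdAddChar (((-∑ p, a p * b p : ℤ)) : ZMod q) := by
    have hcast : ((upperMatrix fun p => (a p : ZMod q))ᵀ *
          ((Matrix.of fun i s => (z i s : ZMod q)) * A.map ((↑) : ℤ → ZMod q) *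
            (Matrix.of fun i s => (z i s : ZMod q))ᵀ)).trace =
        ((∑ p : Idx m, a p * quadZ A z p.1.1 p.1.2 : ℤ) : ZMod q) := by
      rw [trace_upperMatrix_transpose_mul]
      push_cast
      refine Finset.sum_congr rfl fun p _ => ?_
      simp only [quadZ, Matrix.mul_apply, Matrix.transpose_apply, Matrix.of_apply,
        Matrix.map_apply, Finset.sum_mul]
      rw [Finset.sum_comm]
      push_cast
      rfl
    rw [hcast, ← AddChar.map_add_eq_mul, ← Int.cast_add, ZMod.stdAddChar_coe, eR]
    congr 1
    push_cast
    simp only [mul_sub, Finset.sum_sub_distrib]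
    ring
  rw [Saq, Finset.sum_congr rfl fun z _ => hterm z, ← Finset.sum_mul, norm_mul,
    AddChar.norm_apply, mul_one]
  rw [sum_Icc_eq_sum_zmod q fun z : Matrix (Fin m) (Fin n) (ZMod q) => ZMod.stdAddChar
    ((upperMatrix fun p => (a p : ZMod q))ᵀ * (z * A.map ((↑) : ℤ → ZMod q) * zᵀ)).trace]

/-- Square-root cancellation in each of the `n` coordinates. -/
lemma norm_sq_Saq_mul_le {m n : ℕ} (A : Matrix (Fin n) (Fin n) ℤ) (hA : A.IsSymm)
    (hdet : A.det ≠ 0) (q : ℕ) [NeZero q] (a b : Idx m → ℤ)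
    (ha : Int.gcd q (Finset.univ.gcd a) = 1) :
    ‖Saq A q a b‖ ^ 2 * (q : ℝ) ^ n ≤
      ((2 * A.det).natAbs : ℝ) ^ n * (q : ℝ) ^ (2 * (m * n)) := by
  set T := upperMatrix fun p => (a p : ZMod q) with hT
  set A' := A.map ((↑) : ℤ → ZMod q) with hA'
  have hdet' : A'.det = (A.det : ZMod q) := ((Int.castRingHom (ZMod q)).map_det A).symm
  have hbound := norm_sq_sum_addChar_trace_le ZMod.stdAddChar ZMod.injective_stdAddChar T A'
    (hA.map _)
  have hker := card_ker_mulVec_mul_le q (A'.det • (T + Tᵀ)) (2 * A.det).natAbs (by positivity)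
    fun k hk => dvd_of_mul_upperMatrix_eq_zero q a ha A.det k (by rwa [hdet'] at hk)
  simp only [ZMod.card, Fintype.card_fin] at hbound hker
  set N := Nat.card {v // (A'.det • (T + Tᵀ)) *ᵥ v = 0}
  have hker' : (N : ℝ) * q ≤ ((2 * A.det).natAbs : ℝ) * (q : ℝ) ^ m := by exact_mod_cast hker
  calc ‖Saq A q a b‖ ^ 2 * (q : ℝ) ^ n
      ≤ ((q : ℝ) ^ (m * n) * (N : ℝ) ^ n) * (q : ℝ) ^ n := by
        rw [norm_Saq_eq]
        gcongr
    _ = (q : ℝ) ^ (m * n) * ((N : ℝ) * q) ^ n := by ring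
    _ ≤ (q : ℝ) ^ (m * n) * (((2 * A.det).natAbs : ℝ) * (q : ℝ) ^ m) ^ n := by gcongr
    _ = _ := by ring

/-- bound \eqref{Saqbound} for complete exponential sums. -/
theorem stmt10 (m n : ℕ) [NeZero m] [NeZero n]
    (A : Matrix (Fin n) (Fin n) ℤ) (hAs : A.IsSymm)
    (hApd : (A.map ((↑) : ℤ → ℝ)).PosDef)
    (ε : ℝ) (hε : 0 < ε) :
    ∃ K : ℝ, 0 < K ∧
      ∀ q : ℤ, 1 ≤ q → ∀ a : Idx m → ℤ, Int.gcd q (Finset.univ.gcd a) = 1 →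
        ∀ b : Idx m → ℤ,
          ‖Saq A q a b‖ ≤
            K * (q : ℝ) ^ ((m : ℝ) * (n : ℝ) -
              (n : ℝ) / (2 * ((m : ℝ) * ((m : ℝ) + 1) / 2)) + ε) := by
  have hdet : A.det ≠ 0 := by
    intro h
    have h1 : (A.map ((↑) : ℤ → ℝ)).det = ((A.det : ℤ) : ℝ) :=
      ((Int.castRingHom ℝ).map_det A).symm
    have h2 := hApd.det_pos
    rw [h1, h] at h2
    simp at h2
  set D : ℝ := ((2 * A.det).natAbs : ℝ) with hDdef
  have hD : 1 ≤ D := by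
    have : 0 < (2 * A.det).natAbs := by positivity
    rw [hDdef]
    exact_mod_cast this
  refine ⟨D ^ n, by positivity, fun q hq a ha b => ?_⟩
  lift q to ℕ using by omega
  have hq1 : 1 ≤ q := by exact_mod_cast hq
  have : NeZero q := ⟨by omega⟩
  have hqR : (1 : ℝ) ≤ q := by exact_mod_cast hq1
  have hq0 : (0 : ℝ) < q := by positivity
  have hsq := norm_sq_Saq_mul_le A hAs hdet q a b ha
  rw [Int.cast_natCast]
  have hm1 : (1 : ℝ) ≤ m := by exact_mod_cast NeZero.one_le
  have hexp : (m : ℝ) * n - n / 2 ≤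
      (m : ℝ) * n - n / (2 * ((m : ℝ) * ((m : ℝ) + 1) / 2)) + ε := by
    have : (n : ℝ) / (2 * ((m : ℝ) * ((m : ℝ) + 1) / 2)) ≤ n / 2 := by
      gcongr
      nlinarith
    linarith
  have hmain : ‖Saq A q a b‖ ≤ D ^ n * (q : ℝ) ^ ((m : ℝ) * n - n / 2) := by
    refine le_of_sq_le_sq ?_ (by positivity)
    refine le_of_mul_le_mul_right (hsq.trans ?_) (pow_pos hq0 n)
    have hpow : ((q : ℝ) ^ ((m : ℝ) * n - n / 2)) ^ 2 * (q : ℝ) ^ n = (q : ℝ) ^ (2 * (m * n)) := by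
      rw [← Real.rpow_mul_natCast hq0.le, ← Real.rpow_natCast (q : ℝ) n, ← Real.rpow_add hq0,
        ← Real.rpow_natCast]
      congr 1
      push_cast
      ring
    rw [mul_pow, mul_assoc, hpow]
    gcongr
    exact le_self_pow₀ (one_le_pow₀ hD) two_ne_zero
  exact hmain.trans (by gcongr)
end
end

section
/- Suppose n > (2γ + m(m−1))(R+1). Then the singular series factors as a product of local densities: 𝔖(b) = ∏_p α_p(A,B), the product running over all primes p. -/
open scoped BigOperators
open MeasureTheory Matrix Filter

noncomputable section

/-- `S_{a,q}(b)` as a sum over matrices with entries in `ℤ/qℤ`. -/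
def gaussSumMod {m n : ℕ} (A : Matrix (Fin n) (Fin n) ℤ) (B : Matrix (Fin m) (Fin m) ℤ)
    (q : ℕ) [NeZero q] (a : Idx m → ZMod q) : ℂ :=
  ∑ Z : Matrix (Fin m) (Fin n) (ZMod q), ZMod.stdAddChar (∑ p : Idx m,
    a p * ((Z * A.map ((↑) : ℤ → ZMod q) * Zᵀ) p.1.1 p.1.2 - (bvec B p : ZMod q)))

/-- The local density at level `q`, namely `q^{R-mn} · #{X mod q : XᵀAX ≡ B}`. -/
def densityMod (m n : ℕ) (A : Matrix (Fin n) (Fin n) ℤ) (B : Matrix (Fin m) (Fin m) ℤ)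
    (q : ℕ) : ℂ :=
  (q : ℂ) ^ Fintype.card (Idx m) * ((q : ℂ) ^ (m * n))⁻¹ * locCount m n A B q

theorem card_idx (m : ℕ) : Fintype.card (Idx m) = m * (m + 1) / 2 := by
  rw [Fintype.card_congr (Sym2.sortEquiv (α := Fin m)).symm, Sym2.card, Fintype.card_fin,
    Nat.choose_two_right, Nat.add_sub_cancel, mul_comm]

theorem card_idx_pos (m : ℕ) [NeZero m] : 0 < Fintype.card (Idx m) := Fintype.card_pos

theorem eR_int_div (q : ℕ) [NeZero q] (k : ℤ) :
    eR ((k : ℝ) / (q : ℝ)) = ZMod.stdAddChar (k : ZMod q) := by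
  rw [ZMod.stdAddChar_coe, eR]
  push_cast
  ring_nf

theorem sum_Icc_eq_sum_zmod_s14 {ι M : Type*} [Fintype ι] [DecidableEq ι] [AddCommMonoid M]
    (q : ℕ) [NeZero q] (F : (ι → ℤ) → M) :
    ∑ a ∈ Finset.Icc (fun _ : ι => (0 : ℤ)) (fun _ => (q : ℤ) - 1), F a =
      ∑ a : ι → ZMod q, F fun i => ((a i).val : ℤ) := by
  refine Finset.sum_nbij' (fun a i => (a i : ZMod q)) (fun a i => ((a i).val : ℤ)) ?_ ?_ ?_ ?_ ?_
  · simp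
  · intro a _
    rw [Finset.mem_Icc, Pi.le_def, Pi.le_def]
    refine ⟨fun i => by positivity, fun i => ?_⟩
    have := ZMod.val_lt (a i)
    omega
  · intro a ha
    rw [Finset.mem_Icc, Pi.le_def, Pi.le_def] at ha
    funext i
    have h0 := ha.1 i
    have h1 := ha.2 i
    dsimp only at h0 h1 ⊢
    rw [ZMod.val_intCast, Int.emod_eq_of_lt h0 (by omega)]
  · intro a _
    funext i
    simp
  · intro a ha
    rw [Finset.mem_Icc, Pi.le_def, Pi.le_def] at ha
    congr 1
    funext i
    have h0 := ha.1 i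
    have h1 := ha.2 i
    dsimp only at h0 h1 ⊢
    rw [ZMod.val_intCast, Int.emod_eq_of_lt h0 (by omega)]

theorem sum_Icc_matrix_eq_sum_zmod {m n : ℕ} {M : Type*} [AddCommMonoid M]
    (q : ℕ) [NeZero q] (F : (Fin m → Fin n → ℤ) → M) :
    ∑ z ∈ Finset.Icc (fun _ _ => (0 : ℤ)) (fun _ _ => (q : ℤ) - 1), F z =
      ∑ Z : Matrix (Fin m) (Fin n) (ZMod q), F fun i s => ((Z i s).val : ℤ) := by
  have h := sum_Icc_eq_sum_zmod_s14 (ι := Fin m × Fin n) q (fun a => F fun i s => a (i, s))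
  have e : ∑ a : Fin m × Fin n → ZMod q, F (fun i s => ((a (i, s)).val : ℤ)) =
      ∑ Z : Matrix (Fin m) (Fin n) (ZMod q), F fun i s => ((Z i s).val : ℤ) :=
    Fintype.sum_equiv (Equiv.curry _ _ _) _ _ fun _ => rfl
  rw [← e, ← h]
  refine Finset.sum_nbij' (fun z k => z k.1 k.2) (fun a i s => a (i, s)) ?_ ?_ ?_ ?_ ?_
  · intro z hz
    simp only [Finset.mem_Icc, Pi.le_def] at hz ⊢
    exact ⟨fun k => hz.1 k.1 k.2, fun k => hz.2 k.1 k.2⟩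
  · intro z hz
    simp only [Finset.mem_Icc, Pi.le_def] at hz ⊢
    exact ⟨fun i s => hz.1 (i, s), fun i s => hz.2 (i, s)⟩
  · intro z _; rfl
  · intro z _; rfl
  · intro z _; rfl

theorem intCast_quadZ {m n : ℕ} (A : Matrix (Fin n) (Fin n) ℤ) (q : ℕ)
    (z : Fin m → Fin n → ℤ) (i j : Fin m) :
    ((quadZ A z i j : ℤ) : ZMod q) =
      ((Matrix.of fun i s => (z i s : ZMod q)) * A.map ((↑) : ℤ → ZMod q) *
        (Matrix.of fun i s => (z i s : ZMod q))ᵀ) i j := by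
  simp only [quadZ, Matrix.mul_apply, Matrix.transpose_apply, Matrix.of_apply, Matrix.map_apply,
    Finset.sum_mul]
  push_cast
  rw [Finset.sum_comm]

theorem Saq_eq_gaussSumMod {m n : ℕ} (A : Matrix (Fin n) (Fin n) ℤ)
    (B : Matrix (Fin m) (Fin m) ℤ) (q : ℕ) [NeZero q] (a : Idx m → ℤ) :
    Saq A (q : ℤ) a (bvec B) = gaussSumMod (n := n) A B q fun p => (a p : ZMod q) := by
  rw [Saq, sum_Icc_matrix_eq_sum_zmod, gaussSumMod]
  refine Finset.sum_congr rfl fun Z _ => ?_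
  have h := eR_int_div q (∑ p : Idx m, a p *
    (quadZ A (fun i s => ((Z i s).val : ℤ)) p.1.1 p.1.2 - bvec B p))
  push_cast [intCast_quadZ] at h
  simp only [ZMod.natCast_zmod_val] at h
  push_cast
  exact h

theorem AddChar.map_finset_sum {ι M N : Type*} [AddCommMonoid M] [CommMonoid N]
    (ψ : AddChar M N) (s : Finset ι) (f : ι → M) : ψ (∑ i ∈ s, f i) = ∏ i ∈ s, ψ (f i) := by
  classical
  induction s using Finset.induction_on with
  | empty => simp
  | insert i s hi ih => rw [Finset.sum_insert hi, Finset.prod_insert hi, ψ.map_add_eq_mul, ih]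

theorem sum_stdAddChar_linear {ι : Type*} [Fintype ι] [DecidableEq ι] (q : ℕ) [NeZero q]
    (c : ι → ZMod q) :
    ∑ x : ι → ZMod q, ZMod.stdAddChar (∑ i, x i * c i) =
      if c = 0 then (q : ℂ) ^ Fintype.card ι else 0 := by
  have h : ∀ x : ι → ZMod q, (ZMod.stdAddChar (∑ i, x i * c i) : ℂ) =
      ∏ i, ZMod.stdAddChar (x i * c i) := fun x => AddChar.map_finset_sum _ _ _
  simp_rw [h]
  rw [← Fintype.prod_sum (fun i (y : ZMod q) => (ZMod.stdAddChar (y * c i) : ℂ))]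
  simp_rw [AddChar.sum_mulShift _ (ZMod.isPrimitive_stdAddChar q), ZMod.card]
  split_ifs with hc
  · simp [hc]
  · obtain ⟨i, hi⟩ := Function.ne_iff.1 hc
    exact Finset.prod_eq_zero (Finset.mem_univ i) (by simp [show c i ≠ 0 from hi])

theorem sum_gaussSumMod {m n : ℕ} (A : Matrix (Fin n) (Fin n) ℤ)
    (B : Matrix (Fin m) (Fin m) ℤ) (hA : A.IsSymm) (hB : B.IsSymm) (q : ℕ) [NeZero q] :
    ∑ a, gaussSumMod (n := n) A B q a = (q : ℂ) ^ Fintype.card (Idx m) * locCount m n A B q := by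
  classical
  simp only [gaussSumMod]
  rw [Finset.sum_comm]
  simp_rw [sum_stdAddChar_linear]
  rw [← Finset.sum_filter, Finset.sum_const, nsmul_eq_mul, mul_comm, locCount]
  congr 2
  rw [← Fintype.card_subtype, ← Nat.card_eq_fintype_card]
  refine Nat.card_congr ((Matrix.transposeAddEquiv _ _ _).toEquiv.subtypeEquiv fun Z => ?_)
  simp only [Set.mem_ofPred_eq, AddEquiv.toEquiv_eq_coe, EquivLike.coe_coe,
    Matrix.transposeAddEquiv_apply, Matrix.transpose_transpose]
  constructor
  · intro h
    have key : ∀ i j : Fin m, i ≤ j → (Z * A.map ((↑) : ℤ → ZMod q) * Zᵀ) i j = (B i j : ZMod q) :=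
      fun i j hij => sub_eq_zero.1 (congrFun h ⟨(i, j), hij⟩)
    have hs : (Z * A.map ((↑) : ℤ → ZMod q) * Zᵀ)ᵀ = Z * A.map ((↑) : ℤ → ZMod q) * Zᵀ := by
      rw [Matrix.transpose_mul, Matrix.transpose_mul, Matrix.transpose_transpose,
        ← Matrix.transpose_map, hA.eq, Matrix.mul_assoc]
    ext i j
    rcases le_total i j with hij | hij
    · exact key i j hij
    · rw [← hs, Matrix.transpose_apply, key j i hij, Matrix.map_apply, hB.apply]
  · intro h
    funext p
    simp [h, bvec]

theorem AddMonoidHom.card_mul_sum_comp {G H : Type*} [AddGroup G] [Fintype G] [AddGroup H]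
    [Fintype H] (f : G →+ H) (hf : Function.Surjective f) (F : H → ℂ) :
    (Fintype.card H : ℂ) * ∑ x, F (f x) = Fintype.card G * ∑ y, F y := by
  classical
  have hK : ∀ y : H, (Finset.univ.filter fun x => f x = y).card =
      (Finset.univ.filter fun x => f x = 0).card := fun y =>
    AddMonoidHom.card_fiber_eq_of_mem_range f (hf y) (hf 0)
  have hcard : Fintype.card G = Fintype.card H * (Finset.univ.filter fun x => f x = 0).card := by
    rw [← Finset.card_univ (α := G), Finset.card_eq_sum_card_fiberwise (f := f)
      (t := Finset.univ) (fun _ _ => Finset.mem_coe.2 (Finset.mem_univ _)),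
      Finset.sum_congr rfl fun y _ => hK y]
    simp
  rw [← Finset.sum_fiberwise (s := Finset.univ) (g := f)]
  have : ∀ y : H, ∑ x with f x = y, F (f x) =
      ((Finset.univ.filter fun x => f x = 0).card : ℂ) * F y := fun y => by
    rw [Finset.sum_congr rfl (g := fun _ => F y)
      (fun x hx => by rw [(Finset.mem_filter.1 hx).2]), Finset.sum_const, hK, nsmul_eq_mul]
  rw [Finset.sum_congr rfl fun y _ => this y, ← Finset.mul_sum, hcard]
  push_cast
  ring

theorem Saq_mul_left {m n : ℕ} (A : Matrix (Fin n) (Fin n) ℤ) (B : Matrix (Fin m) (Fin m) ℤ)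
    (g d : ℕ) [NeZero g] [NeZero d] (a : Idx m → ℤ) :
    (((g * d : ℕ) : ℂ) ^ (m * n))⁻¹ * Saq (n := n) A ((g * d : ℕ) : ℤ) (fun p => g * a p) (bvec B) =
      ((d : ℂ) ^ (m * n))⁻¹ * Saq (n := n) A (d : ℤ) a (bvec B) := by
  have hg : (g : ℝ) ≠ 0 := Nat.cast_ne_zero.2 (NeZero.ne g)
  have hd : (d : ℝ) ≠ 0 := Nat.cast_ne_zero.2 (NeZero.ne d)
  have hdvd : d ∣ g * d := Dvd.intro_left g rfl
  let f : Matrix (Fin m) (Fin n) (ZMod (g * d)) →+ Matrix (Fin m) (Fin n) (ZMod d) :=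
    (ZMod.castHom hdvd (ZMod d)).toAddMonoidHom.mapMatrix
  have hf : Function.Surjective f := fun Y => by
    choose Z hZ using fun i s => ZMod.castHom_surjective hdvd (Y i s)
    exact ⟨Matrix.of Z, by ext i s; exact hZ i s⟩
  have key : Saq (n := n) A ((g * d : ℕ) : ℤ) (fun p => g * a p) (bvec B) =
      ∑ Z : Matrix (Fin m) (Fin n) (ZMod (g * d)), (ZMod.stdAddChar (∑ p : Idx m,
        (a p : ZMod d) * ((f Z * A.map ((↑) : ℤ → ZMod d) * (f Z)ᵀ) p.1.1 p.1.2 -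
          (bvec B p : ZMod d))) : ℂ) := by
    rw [Saq, sum_Icc_matrix_eq_sum_zmod]
    refine Finset.sum_congr rfl fun Z _ => ?_
    have hfZ : f Z = Matrix.of fun i s => ((Z i s).val : ZMod d) := by
      ext i s
      exact (ZMod.natCast_val (Z i s)).symm
    have h := eR_int_div d (∑ p : Idx m, a p *
      (quadZ A (fun i s => ((Z i s).val : ℤ)) p.1.1 p.1.2 - bvec B p))
    push_cast [intCast_quadZ] at h
    rw [hfZ, ← h]
    congr 1
    push_cast
    rw [div_eq_div_iff (mul_ne_zero hg hd) hd, Finset.sum_mul, Finset.sum_mul]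
    refine Finset.sum_congr rfl fun p _ => ?_
    ring
  have h := f.card_mul_sum_comp hf fun Y => (ZMod.stdAddChar (∑ p : Idx m,
    (a p : ZMod d) * ((Y * A.map ((↑) : ℤ → ZMod d) * Yᵀ) p.1.1 p.1.2 -
      (bvec B p : ZMod d))) : ℂ)
  rw [← key] at h
  have hS := Saq_eq_gaussSumMod (n := n) A B d a
  rw [gaussSumMod] at hS
  rw [← hS] at h
  have hc : ∀ k : ℕ, ∀ [NeZero k],
      (Fintype.card (Matrix (Fin m) (Fin n) (ZMod k)) : ℂ) = (k : ℂ) ^ (m * n) := fun k _ => by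
    rw [← Nat.card_eq_fintype_card, Matrix, Nat.card_fun, Nat.card_fun]
    simp [pow_mul, mul_comm m n]
  rw [hc, hc] at h
  have hg' : ((g * d : ℕ) : ℂ) ≠ 0 := Nat.cast_ne_zero.2 (NeZero.ne _)
  have hd' : (d : ℂ) ≠ 0 := Nat.cast_ne_zero.2 (NeZero.ne d)
  field_simp
  rw [mul_comm, h, mul_comm]

theorem sum_divisors_STerm {m n : ℕ} [NeZero m] (A : Matrix (Fin n) (Fin n) ℤ)
    (B : Matrix (Fin m) (Fin m) ℤ) (hA : A.IsSymm) (hB : B.IsSymm) (q : ℕ) (hq : 0 < q) :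
    ∑ d ∈ q.divisors, STerm (n := n) A B d = densityMod m n A B q := by
  have : NeZero q := ⟨hq.ne'⟩
  have htotal : ((q : ℂ) ^ (m * n))⁻¹ * ∑ a ∈ Finset.Icc (fun _ : Idx m => (0 : ℤ))
      (fun _ => (q : ℤ) - 1), Saq (n := n) A (q : ℤ) a (bvec B) = densityMod m n A B q := by
    rw [sum_Icc_eq_sum_zmod_s14]
    simp_rw [Saq_eq_gaussSumMod]
    simp only [Int.cast_natCast, ZMod.natCast_zmod_val]
    rw [sum_gaussSumMod A B hA hB, densityMod]
    ring
  rw [← htotal, Finset.mul_sum]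
  rw [← Finset.sum_fiberwise_of_maps_to (t := q.divisors)
    (g := fun a : Idx m → ℤ => q / Int.gcd q (Finset.univ.gcd a))]
  swap
  · intro a _
    rw [Nat.mem_divisors]
    refine ⟨Nat.div_dvd_of_dvd ?_, hq.ne'⟩
    exact Int.natCast_dvd_natCast.1 (Int.gcd_dvd_left _ _)
  refine Finset.sum_congr rfl fun d hd => ?_
  obtain ⟨g, hg⟩ := Nat.dvd_of_mem_divisors hd
  have hgd : q = g * d := by rw [hg, mul_comm]
  subst hgd
  have hg0 : g ≠ 0 := left_ne_zero_of_mul hq.ne'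
  have hd0 : d ≠ 0 := right_ne_zero_of_mul hq.ne'
  have : NeZero g := ⟨hg0⟩
  have : NeZero d := ⟨hd0⟩
  have hgpos : 0 < g := Nat.pos_of_ne_zero hg0
  have hdpos : 0 < d := Nat.pos_of_ne_zero hd0
  have hgcd : ∀ a : Idx m → ℤ, Int.gcd ((g * d : ℕ) : ℤ) (Finset.univ.gcd fun p => (g : ℤ) * a p) =
      g * Int.gcd (d : ℤ) (Finset.univ.gcd a) := fun a => by
    rw [Finset.gcd_mul_left, Int.normalize_of_nonneg (by positivity), Nat.cast_mul,
      Int.gcd_mul_left, Int.natAbs_natCast]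
  have hquot : ∀ a : Idx m → ℤ, g * d / Int.gcd ((g * d : ℕ) : ℤ) (Finset.univ.gcd a) = d →
      Int.gcd ((g * d : ℕ) : ℤ) (Finset.univ.gcd a) = g ∧ ∃ a' : Idx m → ℤ, a = fun p => g * a' p :=
    fun a ha => by
      have hG : Int.gcd ((g * d : ℕ) : ℤ) (Finset.univ.gcd a) = g := by
        have h1 := Nat.div_mul_cancel (Int.natCast_dvd_natCast.1
          (Int.gcd_dvd_left ((g * d : ℕ) : ℤ) (Finset.univ.gcd a)))
        rw [ha, mul_comm g d] at h1
        exact Nat.eq_of_mul_eq_mul_left hdpos (by rw [mul_comm g d]; exact h1)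
      refine ⟨hG, ?_⟩
      have hdvd : ∀ p, (g : ℤ) ∣ a p := fun p => by
        have h2 := Int.gcd_dvd_right ((g * d : ℕ) : ℤ) (Finset.univ.gcd a)
        rw [hG] at h2
        exact h2.trans (Finset.gcd_dvd (Finset.mem_univ p))
      choose a' ha' using hdvd
      exact ⟨a', funext ha'⟩
  have hgZ : (0 : ℤ) < g := by exact_mod_cast hgpos
  rw [STerm, Finset.mul_sum]
  refine Finset.sum_nbij' (fun a p => (g : ℤ) * a p) (fun a p => a p / g) ?_ ?_ ?_ ?_ ?_
  · intro a ha
    rw [resid, Finset.mem_filter, Finset.mem_Icc, Pi.le_def, Pi.le_def] at ha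
    rw [Finset.mem_filter, Finset.mem_Icc, Pi.le_def, Pi.le_def, hgcd, ha.2]
    refine ⟨⟨fun p => mul_nonneg (by positivity) (ha.1.1 p), fun p => ?_⟩, ?_⟩
    · have h1 := ha.1.2 p
      have : (1 : ℤ) ≤ g := by exact_mod_cast hgpos
      push_cast
      nlinarith
    · rw [mul_one, Nat.mul_div_cancel_left _ hgpos]
  · intro a ha
    rw [Finset.mem_filter, Finset.mem_Icc, Pi.le_def, Pi.le_def] at ha
    obtain ⟨⟨hlo, hhi⟩, hfib⟩ := ha
    obtain ⟨hG, a', rfl⟩ := hquot a hfib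
    rw [hgcd] at hG
    simp only [Int.mul_ediv_cancel_left _ hgZ.ne']
    rw [resid, Finset.mem_filter, Finset.mem_Icc, Pi.le_def, Pi.le_def]
    refine ⟨⟨fun p => nonneg_of_mul_nonneg_right (hlo p) hgZ, fun p => ?_⟩, ?_⟩
    · have h1 : (g : ℤ) * a' p < g * d := by
        have := hhi p
        push_cast at this
        linarith
      exact Int.le_sub_one_of_lt (lt_of_mul_lt_mul_left h1 hgZ.le)
    · exact Nat.eq_of_mul_eq_mul_left hgpos (by rw [hG, mul_one])
  · intro a _
    funext p
    exact Int.mul_ediv_cancel_left _ (by exact_mod_cast hg0)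
  · intro a ha
    obtain ⟨-, a', rfl⟩ := hquot a (Finset.mem_filter.1 ha).2
    simp only [Int.mul_ediv_cancel_left _ hgZ.ne']
  · intro a _
    exact (Saq_mul_left A B g d a).symm

theorem locCount_mul {m n : ℕ} (A : Matrix (Fin n) (Fin n) ℤ) (B : Matrix (Fin m) (Fin m) ℤ)
    {q r : ℕ} (h : q.Coprime r) :
    locCount m n A B (q * r) = locCount m n A B q * locCount m n A B r := by
  rw [locCount, locCount, locCount, ← Nat.card_prod]
  let e := ZMod.chineseRemainder h
  let π₁ : ZMod (q * r) →+* ZMod q := (RingHom.fst _ _).comp e.toRingHom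
  let π₂ : ZMod (q * r) →+* ZMod r := (RingHom.snd _ _).comp e.toRingHom
  have hcast : ∀ {k : ℕ} (M : Matrix (Fin k) (Fin k) ℤ) (s : ℕ) (π : ZMod (q * r) →+* ZMod s),
      (M.map ((↑) : ℤ → ZMod (q * r))).map π = M.map ((↑) : ℤ → ZMod s) := by
    intro k M s π
    ext i j
    simp
  let E : Matrix (Fin n) (Fin m) (ZMod (q * r)) ≃
      Matrix (Fin n) (Fin m) (ZMod q) × Matrix (Fin n) (Fin m) (ZMod r) :=
    { toFun := fun X => (X.map π₁, X.map π₂)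
      invFun := fun P => Matrix.of fun i j => e.symm (P.1 i j, P.2 i j)
      left_inv := fun X => by
        ext i j
        exact e.symm_apply_apply (X i j)
      right_inv := fun P => Prod.ext
        (by ext i j; exact congrArg Prod.fst (e.apply_symm_apply (P.1 i j, P.2 i j)))
        (by ext i j; exact congrArg Prod.snd (e.apply_symm_apply (P.1 i j, P.2 i j))) }
  have hmap : ∀ (s : ℕ) (π : ZMod (q * r) →+* ZMod s) (X : Matrix (Fin n) (Fin m) (ZMod (q * r))),
      (Xᵀ * A.map ((↑) : ℤ → ZMod (q * r)) * X).map π =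
        (X.map π)ᵀ * A.map ((↑) : ℤ → ZMod s) * X.map π := fun s π X => by
    rw [Matrix.map_mul, Matrix.map_mul, hcast, Matrix.transpose_map]
  refine Nat.card_congr ((E.subtypeEquiv (q := fun P =>
    P.1 ∈ {X | Xᵀ * A.map ((↑) : ℤ → ZMod q) * X = B.map ((↑) : ℤ → ZMod q)} ∧
    P.2 ∈ {X | Xᵀ * A.map ((↑) : ℤ → ZMod r) * X = B.map ((↑) : ℤ → ZMod r)}) fun X => ?_).trans
      (Equiv.subtypeProdEquivProd (p := (· ∈ _)) (q := (· ∈ _))))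
  change _ = _ ↔ ((X.map π₁)ᵀ * _ * X.map π₁ = _) ∧ ((X.map π₂)ᵀ * _ * X.map π₂ = _)
  rw [← hmap, ← hmap, ← hcast B q π₁, ← hcast B r π₂]
  refine ⟨fun hX => ⟨by rw [hX], by rw [hX]⟩, fun hX => Matrix.ext fun i j =>
    e.injective (Prod.ext ?_ ?_)⟩
  · exact congrFun (congrFun hX.1 i) j
  · exact congrFun (congrFun hX.2 i) j

theorem densityMod_mul {m n : ℕ} (A : Matrix (Fin n) (Fin n) ℤ) (B : Matrix (Fin m) (Fin m) ℤ)
    {q r : ℕ} (h : q.Coprime r) :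
    densityMod m n A B (q * r) = densityMod m n A B q * densityMod m n A B r := by
  simp only [densityMod, locCount_mul A B h]
  push_cast
  rw [mul_pow, mul_pow, mul_inv]
  ring

theorem densityMod_one {m n : ℕ} (A : Matrix (Fin n) (Fin n) ℤ) (B : Matrix (Fin m) (Fin m) ℤ) :
    densityMod m n A B 1 = 1 := by
  have : Subsingleton (ZMod 1) := inferInstance
  have h : locCount m n A B 1 = 1 := by
    rw [locCount, Nat.card_eq_one_iff_unique]
    refine ⟨⟨fun X Y => Subtype.ext (Matrix.ext fun i j => Subsingleton.elim _ _)⟩,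
      ⟨⟨0, Matrix.ext fun i j => Subsingleton.elim _ _⟩⟩⟩
  simp [densityMod, h]

theorem STerm_zero {m n : ℕ} [NeZero m] (A : Matrix (Fin n) (Fin n) ℤ)
    (B : Matrix (Fin m) (Fin m) ℤ) : STerm (n := n) A B 0 = 0 := by
  have : resid m ((0 : ℕ) : ℤ) = ∅ := by
    rw [resid, Finset.Icc_eq_empty, Finset.filter_empty]
    intro h
    have := h (Classical.arbitrary (Idx m))
    simp at this
  rw [STerm, this, Finset.sum_empty, mul_zero]

theorem STerm_one {m n : ℕ} [NeZero m] (A : Matrix (Fin n) (Fin n) ℤ)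
    (B : Matrix (Fin m) (Fin m) ℤ) (hA : A.IsSymm) (hB : B.IsSymm) :
    STerm (n := n) A B 1 = 1 := by
  have h := sum_divisors_STerm (n := n) A B hA hB 1 one_pos
  rwa [Nat.divisors_one, Finset.sum_singleton, densityMod_one] at h

open ArithmeticFunction in
theorem STerm_mul {m n : ℕ} [NeZero m] (A : Matrix (Fin n) (Fin n) ℤ)
    (B : Matrix (Fin m) (Fin m) ℤ) (hA : A.IsSymm) (hB : B.IsSymm) {q r : ℕ}
    (h : q.Coprime r) :
    STerm (n := n) A B (q * r) = STerm (n := n) A B q * STerm (n := n) A B r := by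
  let f : ArithmeticFunction ℂ := ⟨fun k => STerm (n := n) A B k, STerm_zero A B⟩
  let F : ArithmeticFunction ℂ := ⟨fun k => if k = 0 then 0 else densityMod m n A B k, if_pos rfl⟩
  have hF : F.IsMultiplicative := by
    rw [IsMultiplicative.iff_ne_zero]
    refine ⟨?_, fun {a b} ha hb hab => ?_⟩
    · simpa [F] using densityMod_one A B
    · simpa [F, ha, hb] using densityMod_mul A B hab
  have hfF : f * (zeta : ArithmeticFunction ℂ) = F := by
    ext k
    rw [coe_mul_zeta_apply]
    rcases Nat.eq_zero_or_pos k with rfl | hk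
    · simp
    · simpa [F, f, hk.ne'] using sum_divisors_STerm (n := n) A B hA hB k hk
  have hf : f = F * ((moebius : ArithmeticFunction ℤ) : ArithmeticFunction ℂ) := by
    rw [← hfF, mul_assoc, coe_zeta_mul_coe_moebius, mul_one]
  have : f.IsMultiplicative := by
    rw [hf]
    exact hF.mul isMultiplicative_moebius.intCast
  exact this.map_mul_of_coprime h

/-- The upper triangular matrix with the entries `a`. -/
def upperMat {m : ℕ} {R : Type*} [Zero R] (a : Idx m → R) : Matrix (Fin m) (Fin m) R :=
  Matrix.of fun i j => if h : i ≤ j then a ⟨(i, j), h⟩ else 0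

theorem sum_idx_mul_eq_trace {m : ℕ} {R : Type*} [CommRing R] (a : Idx m → R)
    (Y : Matrix (Fin m) (Fin m) R) :
    ∑ p : Idx m, a p * Y p.1.1 p.1.2 = ((upperMat a)ᵀ * Y).trace := by
  have h : ((upperMat a)ᵀ * Y).trace = ∑ p : Fin m × Fin m, upperMat a p.1 p.2 * Y p.1 p.2 := by
    rw [Fintype.sum_prod_type, Finset.sum_comm]
    simp [Matrix.trace, Matrix.mul_apply]
  rw [h, ← Finset.sum_subset (Finset.subset_univ (Finset.univ.filter fun p : Fin m × Fin m => p.1 ≤ p.2))]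
  · rw [Finset.sum_subtype (p := fun p : Fin m × Fin m => p.1 ≤ p.2) _ (by simp)]
    refine Finset.sum_congr rfl fun p _ => ?_
    rw [upperMat, Matrix.of_apply, dif_pos p.2]
  · intro p _ hp
    have : ¬ p.1 ≤ p.2 := by simpa using hp
    simp [upperMat, this]

theorem sum_stdAddChar_trace {m n : ℕ} (q : ℕ) [NeZero q] (X : Matrix (Fin n) (Fin m) (ZMod q)) :
    ∑ W : Matrix (Fin m) (Fin n) (ZMod q), ZMod.stdAddChar (W * X).trace =
      if X = 0 then (q : ℂ) ^ (m * n) else 0 := by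
  classical
  have h := sum_stdAddChar_linear (ι := Fin m × Fin n) q fun k => X k.2 k.1
  have e : ∑ a : Fin m × Fin n → ZMod q, (ZMod.stdAddChar (∑ k, a k * X k.2 k.1) : ℂ) =
      ∑ W : Matrix (Fin m) (Fin n) (ZMod q), ZMod.stdAddChar (W * X).trace := by
    refine Fintype.sum_equiv (Equiv.curry _ _ _) _ _ fun a => ?_
    rw [Fintype.sum_prod_type]
    rfl
  rw [← e, h]
  have hX : ((fun k : Fin m × Fin n => X k.2 k.1) = 0) ↔ X = 0 :=
    ⟨fun h => Matrix.ext fun s i => congrFun h (i, s), fun h => by rw [h]; rfl⟩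
  simp [hX]

theorem norm_gaussSumMod_sq_le {m n : ℕ} (A : Matrix (Fin n) (Fin n) ℤ)
    (B : Matrix (Fin m) (Fin m) ℤ) (hA : A.IsSymm) (q : ℕ) [NeZero q] (a : Idx m → ZMod q) :
    ‖gaussSumMod (n := n) A B q a‖ ^ 2 ≤ (q : ℝ) ^ (m * n) *
      Nat.card {H : Matrix (Fin m) (Fin n) (ZMod q) //
        A.map ((↑) : ℤ → ZMod q) * Hᵀ * (upperMat a + (upperMat a)ᵀ) = 0} := by
  classical
  set A' := A.map ((↑) : ℤ → ZMod q) with hA'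
  set T := upperMat a with hT
  have hAs : A'ᵀ = A' := by rw [hA', ← Matrix.transpose_map, hA.eq]
  set c : ZMod q := ∑ p, a p * (bvec B p : ZMod q)
  have hU : gaussSumMod (n := n) A B q a = ∑ Z : Matrix (Fin m) (Fin n) (ZMod q),
      (ZMod.stdAddChar ((Tᵀ * (Z * A' * Zᵀ)).trace - c) : ℂ) := by
    rw [gaussSumMod]
    refine Finset.sum_congr rfl fun Z _ => ?_
    rw [hT, ← sum_idx_mul_eq_trace, ← Finset.sum_sub_distrib]
    simp_rw [mul_sub]
    rfl
  have hpol : ∀ W H : Matrix (Fin m) (Fin n) (ZMod q),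
      ((Tᵀ * ((W + H) * A' * (W + H)ᵀ)).trace - c) - ((Tᵀ * (W * A' * Wᵀ)).trace - c) =
        (Tᵀ * (H * A' * Hᵀ)).trace + (W * (A' * Hᵀ * (T + Tᵀ))).trace := fun W H => by
    have h1 : (Tᵀ * (W * A' * Hᵀ)).trace = (W * (A' * Hᵀ * Tᵀ)).trace := by
      rw [Matrix.trace_mul_comm]
      simp only [Matrix.mul_assoc]
    have h2 : (Tᵀ * (H * A' * Wᵀ)).trace = (W * (A' * Hᵀ * T)).trace := by
      rw [← Matrix.trace_transpose]
      simp only [Matrix.transpose_mul, Matrix.transpose_transpose, hAs, Matrix.mul_assoc]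
    rw [Matrix.transpose_add]
    simp only [Matrix.add_mul, Matrix.mul_add, Matrix.trace_add, h1, h2]
    ring
  have hsq : gaussSumMod (n := n) A B q a * (starRingEnd ℂ) (gaussSumMod (n := n) A B q a) =
      ∑ H : Matrix (Fin m) (Fin n) (ZMod q), (ZMod.stdAddChar (Tᵀ * (H * A' * Hᵀ)).trace : ℂ) *
        ∑ W : Matrix (Fin m) (Fin n) (ZMod q),
          ZMod.stdAddChar (W * (A' * Hᵀ * (T + Tᵀ))).trace := by
    rw [hU, map_sum, Finset.sum_mul_sum, Finset.sum_comm]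
    simp_rw [Finset.mul_sum]
    conv_rhs => rw [Finset.sum_comm]
    refine Finset.sum_congr rfl fun W _ => ?_
    refine (Fintype.sum_equiv (Equiv.addLeft W) _ _ fun H => ?_).symm
    rw [Equiv.coe_addLeft, ← AddChar.map_neg_eq_conj, ← AddChar.map_add_eq_mul,
      ← AddChar.map_add_eq_mul, ← sub_eq_add_neg, hpol]
  have hnorm : ‖gaussSumMod (n := n) A B q a‖ ^ 2 =
      ‖gaussSumMod (n := n) A B q a * (starRingEnd ℂ) (gaussSumMod (n := n) A B q a)‖ := by
    rw [norm_mul, RCLike.norm_conj, sq]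
  rw [hnorm, hsq]
  refine (norm_sum_le _ _).trans (le_of_eq ?_)
  simp_rw [norm_mul, AddChar.norm_apply, one_mul, sum_stdAddChar_trace, apply_ite norm, norm_zero]
  rw [← Finset.sum_filter, Finset.sum_const, nsmul_eq_mul, mul_comm, Nat.card_eq_fintype_card,
    Fintype.card_subtype]
  simp

theorem mul_card_ker_le {m : ℕ} (q : ℕ) [NeZero q] (D : ℤ) (hD : D ≠ 0) (a : Idx m → ℤ)
    (ha : Int.gcd q (Finset.univ.gcd a) = 1) :
    q * Nat.card {v : Fin m → ZMod q // (D : ZMod q) • (v ᵥ* (upperMat (fun p => (a p : ZMod q)) +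
      (upperMat fun p => (a p : ZMod q))ᵀ)) = 0} ≤ 2 * D.natAbs * q ^ m := by
  classical
  set M := upperMat (fun p => (a p : ZMod q)) + (upperMat fun p => (a p : ZMod q))ᵀ with hM
  let φ : (Fin m → ZMod q) →+ (Fin m → ZMod q) :=
    ((D : ZMod q) • Matrix.vecMulLinear M).toAddMonoidHom
  have hker : Nat.card {v : Fin m → ZMod q // (D : ZMod q) • (v ᵥ* M) = 0} = Nat.card φ.ker :=
    Nat.card_congr (Equiv.subtypeEquivRight fun v => Iff.rfl)
  have hcard : Nat.card φ.ker * Nat.card φ.range = q ^ m := by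
    rw [← AddSubgroup.index_ker, AddSubgroup.card_mul_index]
    simp
  set N := Nat.card φ.range with hN
  have hkill : ∀ i j, (N : ZMod q) * ((D : ZMod q) * M i j) = 0 := fun i j => by
    have h1 : N • (⟨φ (Pi.single i 1), ⟨_, rfl⟩⟩ : φ.range) = 0 := card_nsmul_eq_zero'
    have h2 := congrFun (congrArg Subtype.val h1) j
    rw [mul_left_comm]
    simpa [φ] using h2
  have hdvd : ∀ p : Idx m, (q : ℤ) ∣ 2 * N * D * a p := fun p => by
    rw [← ZMod.intCast_zmod_eq_zero_iff_dvd]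
    push_cast
    have h := hkill p.1.1 p.1.2
    rw [hM, Matrix.add_apply, Matrix.transpose_apply] at h
    rcases p.2.lt_or_eq with hlt | heq
    · simp only [upperMat, Matrix.of_apply, p.2, not_le.2 hlt, dif_pos, dif_neg,
        not_false_eq_true, add_zero] at h
      linear_combination 2 * h
    · obtain ⟨⟨i, j⟩, hp⟩ := p
      obtain rfl : i = j := heq
      simp only [upperMat, Matrix.of_apply, le_refl, dif_pos] at h
      linear_combination h
  have hq : (q : ℤ) ∣ 2 * N * D := by
    have h1 : (q : ℤ) ∣ Finset.univ.gcd fun p => 2 * N * D * a p :=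
      Finset.dvd_gcd fun p _ => hdvd p
    rw [Finset.gcd_mul_left] at h1
    have h2 : (q : ℤ) ∣ 2 * N * D * Finset.univ.gcd a :=
      h1.trans (mul_dvd_mul (normalize_dvd_iff.2 dvd_rfl) dvd_rfl)
    exact Int.dvd_of_dvd_mul_left_of_gcd_one h2 ha
  have hle : q ≤ 2 * N * D.natAbs := by
    have h := Int.natAbs_dvd_natAbs.2 hq
    simp only [Int.natAbs_mul, Int.natAbs_natCast] at h
    refine Nat.le_of_dvd (Nat.mul_pos (Nat.mul_pos two_pos Nat.card_pos) (Int.natAbs_pos.2 hD)) h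
  rw [hker, ← hcard]
  calc q * Nat.card φ.ker ≤ 2 * N * D.natAbs * Nat.card φ.ker := Nat.mul_le_mul_right _ hle
    _ = _ := by ring

theorem norm_Saq_sq_mul_le {m n : ℕ} (A : Matrix (Fin n) (Fin n) ℤ)
    (B : Matrix (Fin m) (Fin m) ℤ) (hA : A.IsSymm) (hdet : A.det ≠ 0) (q : ℕ) [NeZero q]
    (a : Idx m → ℤ) (ha : Int.gcd q (Finset.univ.gcd a) = 1) :
    ‖Saq (n := n) A (q : ℤ) a (bvec B)‖ ^ 2 * (q : ℝ) ^ n ≤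
      (2 * A.det.natAbs : ℝ) ^ n * ((q : ℝ) ^ (m * n)) ^ 2 := by
  rw [Saq_eq_gaussSumMod]
  have hW := norm_gaussSumMod_sq_le (n := n) A B hA q fun p => (a p : ZMod q)
  have hv := mul_card_ker_le q A.det hdet a ha
  set M := upperMat (fun p => (a p : ZMod q)) + (upperMat fun p => (a p : ZMod q))ᵀ
  set A' := A.map ((↑) : ℤ → ZMod q) with hA'
  have hdet' : A'.det = (A.det : ZMod q) := (Int.cast_det A).symm
  have hcols : ∀ H : Matrix (Fin m) (Fin n) (ZMod q), A' * Hᵀ * M = 0 →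
      ∀ s, (A.det : ZMod q) • (Hᵀ s ᵥ* M) = 0 := fun H hH s => by
    have h1 : A'.adjugate * (A' * Hᵀ * M) = (A.det : ZMod q) • (Hᵀ * M) := by
      rw [Matrix.mul_assoc A', ← Matrix.mul_assoc, Matrix.adjugate_mul, hdet', Matrix.smul_mul,
        Matrix.one_mul]
    rw [hH, Matrix.mul_zero] at h1
    exact (congrFun h1 s).symm
  have hK : Nat.card {H : Matrix (Fin m) (Fin n) (ZMod q) // A' * Hᵀ * M = 0} ≤
      Nat.card {v : Fin m → ZMod q // (A.det : ZMod q) • (v ᵥ* M) = 0} ^ n := by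
    have := Nat.card_le_card_of_injective
      (fun (H : {H : Matrix (Fin m) (Fin n) (ZMod q) // A' * Hᵀ * M = 0}) (s : Fin n) =>
        (⟨H.1ᵀ s, hcols H.1 H.2 s⟩ :
          {v : Fin m → ZMod q // (A.det : ZMod q) • (v ᵥ* M) = 0}))
      (fun H H' h => Subtype.ext (Matrix.ext fun i s =>
        congrFun (congrArg Subtype.val (congrFun h s)) i))
    rwa [Nat.card_fun, Nat.card_fin] at this
  have hK' : (Nat.card {H : Matrix (Fin m) (Fin n) (ZMod q) // A' * Hᵀ * M = 0} : ℝ) * (q : ℝ) ^ n ≤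
      (2 * A.det.natAbs : ℝ) ^ n * (q : ℝ) ^ (m * n) := by
    have h := (Nat.mul_le_mul_right (q ^ n) hK).trans
      ((mul_pow _ _ n).symm.trans_le (Nat.pow_le_pow_left ((mul_comm _ _).trans_le hv) n))
    rw [mul_pow, ← pow_mul] at h
    exact_mod_cast h
  calc _ ≤ (q : ℝ) ^ (m * n) * Nat.card {H : Matrix (Fin m) (Fin n) (ZMod q) //
        A' * Hᵀ * M = 0} * (q : ℝ) ^ n := by gcongr
    _ ≤ (q : ℝ) ^ (m * n) * ((2 * A.det.natAbs : ℝ) ^ n * (q : ℝ) ^ (m * n)) := by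
        rw [mul_assoc]; gcongr
    _ = _ := by ring

theorem card_resid_le (m q : ℕ) : (resid m (q : ℤ)).card ≤ q ^ Fintype.card (Idx m) := by
  refine (Finset.card_filter_le _ _).trans ?_
  rw [Pi.card_Icc]
  simp

theorem norm_STerm_le {m n : ℕ} [NeZero m] (A : Matrix (Fin n) (Fin n) ℤ)
    (B : Matrix (Fin m) (Fin m) ℤ) (hA : A.IsSymm) (hdet : A.det ≠ 0)
    (hn : 2 * Fintype.card (Idx m) + 3 ≤ n) (q : ℕ) :
    ‖STerm (n := n) A B q‖ ≤
      √((2 * A.det.natAbs : ℝ) ^ n) * (1 / (q : ℝ) ^ (3 / 2 : ℝ)) := by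
  rcases Nat.eq_zero_or_pos q with rfl | hq
  · rw [STerm_zero, norm_zero]
    positivity
  have : NeZero q := ⟨hq.ne'⟩
  have hq1 : (1 : ℝ) ≤ q := by exact_mod_cast hq
  set R := Fintype.card (Idx m)
  set C : ℝ := √((2 * A.det.natAbs : ℝ) ^ n) with hC
  have hS : ∀ a ∈ resid m (q : ℤ), ‖Saq (n := n) A (q : ℤ) a (bvec B)‖ * (q : ℝ) ^ R *
      (q : ℝ) ^ (3 / 2 : ℝ) ≤ C * (q : ℝ) ^ (m * n) := fun a ha => by
    have h := norm_Saq_sq_mul_le (n := n) A B hA hdet q a (Finset.mem_filter.1 ha).2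
    refine le_of_sq_le_sq ?_ (by positivity)
    rw [mul_pow, mul_pow, mul_pow, hC, Real.sq_sqrt (by positivity)]
    refine le_trans ?_ h
    rw [mul_assoc]
    gcongr
    rw [← Real.rpow_natCast ((q : ℝ) ^ (3 / 2 : ℝ)), ← Real.rpow_mul (by positivity)]
    norm_num
    rw [← pow_mul, ← pow_add]
    exact pow_le_pow_right₀ hq1 (by omega)
  rw [STerm, norm_mul, norm_inv, norm_pow, Complex.norm_natCast]
  have hsum : ‖∑ a ∈ resid m (q : ℤ), Saq (n := n) A (q : ℤ) a (bvec B)‖ ≤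
      C * (q : ℝ) ^ (m * n) / (q : ℝ) ^ (3 / 2 : ℝ) := by
    refine (norm_sum_le_of_le (f := fun a => Saq (n := n) A (q : ℤ) a (bvec B))
      (n := fun _ => C * (q : ℝ) ^ (m * n) / (q : ℝ) ^ (3 / 2 : ℝ) / (q : ℝ) ^ R) _
      fun a ha => ?_).trans ?_
    · rw [le_div_iff₀ (by positivity), le_div_iff₀ (by positivity)]
      exact hS a ha
    · rw [Finset.sum_const, nsmul_eq_mul, mul_div_left_comm]
      refine mul_le_of_le_one_right (by positivity) ?_
      rw [div_le_one (by positivity)]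
      exact_mod_cast card_resid_le m q
  calc _ ≤ ((q : ℝ) ^ (m * n))⁻¹ * (C * (q : ℝ) ^ (m * n) / (q : ℝ) ^ (3 / 2 : ℝ)) := by gcongr
    _ = _ := by field_simp

theorem summable_norm_STerm {m n : ℕ} [NeZero m] (A : Matrix (Fin n) (Fin n) ℤ)
    (B : Matrix (Fin m) (Fin m) ℤ) (hA : A.IsSymm) (hdet : A.det ≠ 0)
    (hn : 2 * Fintype.card (Idx m) + 3 ≤ n) :
    Summable fun q => ‖STerm (n := n) A B q‖ :=
  Summable.of_nonneg_of_le (fun _ => norm_nonneg _) (norm_STerm_le A B hA hdet hn)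
    ((Real.summable_one_div_nat_rpow.2 (by norm_num)).mul_left _)

theorem natCast_le_gamT {m : ℕ} [NeZero m] (B : Matrix (Fin m) (Fin m) ℤ)
    (hBmono : ∀ i j : Fin m, i ≤ j → B i i ≤ B j j) (hB11 : 2 ≤ B 0 0) : (m : ℝ) ≤ gamT B := by
  have h : ∀ i : Fin m, 1 ≤ (gamI B i)⁻¹ := fun i => by
    have h0 : (2 : ℝ) ≤ ((B 0 0 : ℤ) : ℝ) := by exact_mod_cast hB11
    have hi : ((B 0 0 : ℤ) : ℝ) ≤ ((B i i : ℤ) : ℝ) := by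
      exact_mod_cast hBmono 0 i (Fin.zero_le i)
    rw [gamI, inv_div, one_le_div (Real.log_pos (by linarith))]
    exact Real.log_le_log (by linarith) hi
  calc (m : ℝ) = ∑ _i : Fin m, (1 : ℝ) := by simp
    _ ≤ gamT B := Finset.sum_le_sum fun i _ => h i

theorem two_mul_card_idx_add_three_le (m n : ℕ) [NeZero m] (B : Matrix (Fin m) (Fin m) ℤ)
    (hBmono : ∀ i j : Fin m, i ≤ j → B i i ≤ B j j) (hB11 : 2 ≤ B 0 0)
    (hn : (n : ℝ) > (2 * gamT B + (m : ℝ) * ((m : ℝ) - 1)) *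
      ((m : ℝ) * ((m : ℝ) + 1) / 2 + 1)) :
    2 * Fintype.card (Idx m) + 3 ≤ n := by
  have hγ := natCast_le_gamT B hBmono hB11
  have hR : (m : ℝ) * ((m : ℝ) + 1) = 2 * Fintype.card (Idx m) := by
    rw [card_idx]
    exact_mod_cast (Nat.mul_div_cancel' (Nat.even_mul_succ_self m).two_dvd).symm
  have hR1 : (1 : ℝ) ≤ Fintype.card (Idx m) := by exact_mod_cast card_idx_pos m
  rw [hR] at hn
  have h : 2 * (Fintype.card (Idx m) : ℝ) + 2 < n := by nlinarith
  exact_mod_cast h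

theorem densityMod_eq_zpow_mul {m n : ℕ} (A : Matrix (Fin n) (Fin n) ℤ)
    (B : Matrix (Fin m) (Fin m) ℤ) (p t : ℕ) (hp : p ≠ 0) :
    densityMod m n A B (p ^ t) =
      (((p : ℝ) ^ (-(t : ℤ) * ((m : ℤ) * (n : ℤ) - (m : ℤ) * ((m : ℤ) + 1) / 2)) *
        (locCount m n A B (p ^ t) : ℝ) : ℝ) : ℂ) := by
  have hp' : (p : ℂ) ≠ 0 := Nat.cast_ne_zero.2 hp
  have hR : (m : ℤ) * ((m : ℤ) + 1) / 2 = (Fintype.card (Idx m) : ℤ) := by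
    rw [card_idx]
    push_cast
    rfl
  rw [hR, densityMod]
  push_cast
  congr 1
  rw [← pow_mul, ← pow_mul, ← zpow_natCast, ← zpow_natCast, ← _root_.zpow_neg, ← _root_.zpow_add₀ hp']
  congr 1
  push_cast
  ring

/-- Lemma 6.1, factorization of the singular series. -/
theorem stmt14 (m n : ℕ) [NeZero m] [NeZero n]
    (A : Matrix (Fin n) (Fin n) ℤ) (hAs : A.IsSymm)
    (hApd : (A.map ((↑) : ℤ → ℝ)).PosDef)
    (B : Matrix (Fin m) (Fin m) ℤ) (hBs : B.IsSymm)
    (hBpd : (B.map ((↑) : ℤ → ℝ)).PosDef)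
    (hBmono : ∀ i j : Fin m, i ≤ j → B i i ≤ B j j)
    (hBoff : ∀ i j : Fin m, i < j → |B i j| ≤ B i i)
    (hB11 : 2 ≤ B 0 0)
    (hn : (n : ℝ) > (2 * gamT B + (m : ℝ) * ((m : ℝ) - 1)) *
      ((m : ℝ) * ((m : ℝ) + 1) / 2 + 1)) :
    ∀ αp : Nat.Primes → ℝ,
      (∀ p : Nat.Primes, ∀ᶠ t : ℕ in Filter.atTop,
        αp p = ((p : ℕ) : ℝ) ^ (-(t : ℤ) * ((m : ℤ) * (n : ℤ) - (m : ℤ) * ((m : ℤ) + 1) / 2)) *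
          (locCount m n A B ((p : ℕ) ^ t) : ℝ)) →
      Sing A B = ∏' p : Nat.Primes, ((αp p : ℝ) : ℂ) := by
  intro αp hαp
  have hdet : A.det ≠ 0 := fun h => by
    have hpos := hApd.det_pos
    rw [← Int.cast_det, h, Int.cast_zero] at hpos
    exact lt_irrefl _ hpos
  have hdim := two_mul_card_idx_add_three_le m n B hBmono hB11 hn
  have hsum := summable_norm_STerm (n := n) A B hAs hdet hdim
  rw [Sing, ← EulerProduct.eulerProduct_tprod (STerm_one A B hAs hBs)
    (STerm_mul A B hAs hBs) hsum (STerm_zero A B)]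
  refine tprod_congr fun p => ?_
  have hinj : Function.Injective fun e : ℕ => (p : ℕ) ^ e := Nat.pow_right_injective p.2.two_le
  have hlim := ((hsum.of_norm.comp_injective hinj).hasSum.tendsto_sum_nat).comp
    (tendsto_add_atTop_nat 1)
  refine tendsto_nhds_unique hlim (tendsto_const_nhds.congr' ?_)
  filter_upwards [hαp p] with t ht
  rw [ht, ← densityMod_eq_zpow_mul A B p t p.2.ne_zero,
    ← sum_divisors_STerm A B hAs hBs _ (pow_pos p.2.pos t), Nat.sum_divisors_prime_pow p.2]
  rfl
end
end
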